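/- The Baumslag–Solitar group BS(m, n) with 0 < n ≤ |m| is residually a finite p-group for the prime p if and only if (n = 1 and m ≡ 1 mod p) or (m = n = p^r for some r ≥ 0) or (p = 2 and m = −n = 2^r for some r ≥ 1). -/

import Mathlib

def ResiduallyFiniteP (p : ℕ) (G : Type*) [Group G] : Prop :=
  ∀ g : G, g ≠ 1 → ∃ (Q : Type) (_ : Group Q) (f : G →* Q),
    Finite Q ∧ IsPGroup p Q ∧ f g ≠ 1

/-!
Sufficiency. Groups of unipotent matrices over `ZMod (p ^ N)` are `p`-groups. A word
`x₁ ^ e₁ ⋯ x_L ^ e_L` in a free group, with consecutive letters distinct and exponents nonzero, is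
detected by sending each letter `x` to `1 + S_x`, where `S_x` is the part of the shift matrix of
size `L + 1` at the positions at which `x` occurs: the corner entry of the image is `e₁ ⋯ e_L`.
Hence free groups, and their extensions by finite `p`-groups, are residually finite-`p`. In
`BS(m, n)` with `m = n * ε` and `p ∣ ε - 1`, the powers of `a` are detected by the matrices
`a ↦ !![1, 1; 0, 1]`, `t ↦ !![ε, 0; 0, 1]`. An element of `BS(m, 1)` of `t`-exponent zero is
conjugate to a power of `a`. If `ε` is a unit and `n = p ^ r`, then `⟨aⁿ⟩` is normal with quotient
`C_n ∗ ℤ`, which is a free group extended by `C_n`.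

Necessity. Write `n = p ^ s * n'` with `p ∤ n'`, and `x = a ^ p ^ s`. If the power of `p` in `m`
exceeded that in `n`, the relation would kill `x` in every finite `p`-group, so by symmetry the two
powers agree and `t x ^ n' t⁻¹ = x ^ m'`. In a finite `p`-group `x` is a power of `x ^ n'`, so
`t x t⁻¹` is a power of `x` and commutes with `a`; Britton's lemma then gives `n ∣ p ^ s` unless
`m = ± 1`. Finally, in a finite `p`-group `y x y⁻¹ = x ^ m` with `x ≠ 1` forces `m ≡ 1` modulo `p`,
because `m ^ p ^ k ≡ m`.
-/

open Polynomial in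
theorem exists_pow_prime_pow_eq_one_of_isNilpotent_sub_one {R : Type*} [Ring R] {p : ℕ}
    (hp : p.Prime) (hpR : IsNilpotent (p : R)) {u : R} (hu : IsNilpotent (u - 1)) :
    ∃ j, u ^ p ^ j = 1 := by
  obtain ⟨k, hk⟩ := hpR
  obtain ⟨l, hl⟩ := hu
  have h_unip : (u - 1) ^ p ^ l = 0 := pow_eq_zero_of_le (Nat.lt_pow_self hp.one_lt).le hl
  have h_frob : (p : ℤ[X]) ∣ X ^ p ^ l - ((X - 1) ^ p ^ l + 1) := by
    obtain ⟨r, hr⟩ := exists_add_pow_prime_pow_eq hp (X - 1 : ℤ[X]) 1 l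
    rw [sub_add_cancel, one_pow] at hr
    exact ⟨(X - 1) * 1 * r, by rw [hr]; ring⟩
  obtain ⟨q, hq⟩ := dvd_sub_pow_of_dvd_sub h_frob k
  have h_eval := congrArg (aeval u) hq
  simp only [map_sub, map_pow, map_add, map_mul, map_natCast, map_one, aeval_X, h_unip,
    zero_add, one_pow, pow_succ (p : R), hk, zero_mul, ← pow_mul, ← pow_add] at h_eval
  exact ⟨l + k, sub_eq_zero.mp h_eval⟩

section UpperTriangular

variable {ι R : Type*} [Fintype ι] [LinearOrder ι] [CommRing R]

open Polynomial in
theorem isNilpotent_of_isUpperTriangular {M : Matrix ι ι R} (hM : M.IsUpperTriangular)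
    (hdiag : ∀ i, IsNilpotent (M i i)) : IsNilpotent M := by
  choose k hk using hdiag
  have hdvd : M.charpoly ∣ X ^ ∑ i, k i := by
    rw [Matrix.charpoly_of_isUpperTriangular M hM, ← Finset.prod_pow_eq_pow_sum]
    refine Finset.prod_dvd_prod_of_dvd _ _ fun i _ => ?_
    simpa only [← C_pow, hk, C_0, sub_zero] using sub_dvd_pow_sub_pow X (C (M i i)) (k i)
  obtain ⟨q, hq⟩ := hdvd
  refine ⟨∑ i, k i, ?_⟩
  simpa only [map_pow, aeval_X, map_mul, Matrix.aeval_self_charpoly, zero_mul]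
    using congrArg (aeval M) hq

theorem mul_apply_self_of_isUpperTriangular {M N : Matrix ι ι R} (hM : M.IsUpperTriangular)
    (hN : N.IsUpperTriangular) (i : ι) : (M * N) i i = M i i * N i i := by
  rw [Matrix.mul_apply, Finset.sum_eq_single i _ (by simp)]
  intro j _ hji
  rcases hji.lt_or_gt with h | h
  · rw [hM h, zero_mul]
  · rw [hN h, mul_zero]

variable (ι R) in
/-- The monoid of upper triangular matrices with diagonal entries in `1 + nil(R)`. Over a ring in
which the prime `p` is nilpotent it is a source of `p`-groups. -/
def upperUnipotent : Submonoid (Matrix ι ι R) where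
  carrier := {M | M.IsUpperTriangular ∧ ∀ i, IsNilpotent (M i i - 1)}
  one_mem' := ⟨Matrix.blockTriangular_one, fun i => by simp⟩
  mul_mem' := by
    rintro M N ⟨hM, hM1⟩ ⟨hN, hN1⟩
    refine ⟨hM.mul hN, fun i => ?_⟩
    have hsplit : (M * N) i i - 1 = (M i i - 1) * N i i + (N i i - 1) := by
      rw [mul_apply_self_of_isUpperTriangular hM hN]; ring
    rw [hsplit]
    exact (Commute.all _ _).isNilpotent_add ((Commute.all _ _).isNilpotent_mul_right (hM1 i))
      (hN1 i)

theorem exists_pow_prime_pow_eq_one_of_upperUnipotent {p : ℕ} (hp : p.Prime)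
    (hpR : IsNilpotent (p : R)) (u : upperUnipotent ι R) : ∃ j, u ^ p ^ j = 1 := by
  obtain ⟨htri, hdiag⟩ := u.2
  have hunip : IsNilpotent (u - 1 : Matrix ι ι R) :=
    isNilpotent_of_isUpperTriangular (htri.sub Matrix.blockTriangular_one) (by simpa using hdiag)
  have hp_mat : IsNilpotent (p : Matrix ι ι R) := by
    simpa using hpR.map (Matrix.scalar ι)
  obtain ⟨j, hj⟩ := exists_pow_prime_pow_eq_one_of_isNilpotent_sub_one hp hp_mat hunip
  exact ⟨j, Subtype.ext hj⟩

theorem isUnit_of_upperUnipotent {p : ℕ} (hp : p.Prime) (hpR : IsNilpotent (p : R))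
    (u : upperUnipotent ι R) : IsUnit u := by
  obtain ⟨j, hj⟩ := exists_pow_prime_pow_eq_one_of_upperUnipotent hp hpR u
  exact IsUnit.of_pow_eq_one hj (pow_ne_zero j hp.ne_zero)

theorem isPGroup_units_upperUnipotent {p : ℕ} (hp : p.Prime) (hpR : IsNilpotent (p : R)) :
    IsPGroup p (upperUnipotent ι R)ˣ :=
  isPGroup_iff_pow_pow_eq_one.mpr fun u =>
    (exists_pow_prime_pow_eq_one_of_upperUnipotent hp hpR u.1).imp fun _ hj => Units.ext hj

end UpperTriangular

/-- The element `g` has nontrivial image in some finite `p`-group quotient of `G`; a group is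
residually finite-`p` when all its nontrivial elements have this property. -/
def SurvivesInFiniteP (p : ℕ) {G : Type*} [Group G] (g : G) : Prop :=
  ∃ (Q : Type) (_ : Group Q) (f : G →* Q), Finite Q ∧ IsPGroup p Q ∧ f g ≠ 1

namespace SurvivesInFiniteP

variable {p : ℕ} {G H : Type*} [Group G] [Group H] {g : G}

theorem of_map_ne_one [Finite H] (hH : IsPGroup p H) (f : G →* H) (hg : f g ≠ 1) :
    SurvivesInFiniteP p g := by
  let e : H ≃* Shrink.{0} H := Shrink.mulEquiv.symm
  exact ⟨Shrink.{0} H, inferInstance, e.toMonoidHom.comp f, inferInstance, hH.of_equiv e,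
    (map_ne_one_iff e e.injective).mpr hg⟩

theorem of_map (f : G →* H) (hg : SurvivesInFiniteP p (f g)) : SurvivesInFiniteP p g := by
  obtain ⟨Q, _, q, hfin, hQ, hqg⟩ := hg
  exact ⟨Q, _, q.comp f, hfin, hQ, hqg⟩

theorem of_upperUnipotent (hp : p.Prime) {ι R : Type*} [Fintype ι] [LinearOrder ι] [CommRing R]
    [Finite R] (hpR : IsNilpotent (p : R)) (f : G →* upperUnipotent ι R) (hg : f g ≠ 1) :
    SurvivesInFiniteP p g :=
  of_map_ne_one (isPGroup_units_upperUnipotent hp hpR) f.toHomUnits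
    fun h => hg (congrArg Units.val h)

end SurvivesInFiniteP

namespace ResiduallyFiniteP

variable {p : ℕ} {G H : Type*} [Group G] [Group H]

theorem of_injective (hH : ResiduallyFiniteP p H) {f : G →* H} (hf : Function.Injective f) :
    ResiduallyFiniteP p G :=
  fun g hg => SurvivesInFiniteP.of_map f (hH (f g) ((map_ne_one_iff f hf).mpr hg))

theorem of_ker [Finite H] (hH : IsPGroup p H) (f : G →* H) (hker : ResiduallyFiniteP p f.ker) :
    ResiduallyFiniteP p G := by
  intro g hg
  by_cases hfg : f g = 1
  swap
  · exact SurvivesInFiniteP.of_map_ne_one hH f hfg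
  obtain ⟨Q, _, q, _, hQ, hqg⟩ := hker ⟨g, hfg⟩ fun h => hg (congrArg Subtype.val h)
  let M : Subgroup G := q.ker.map f.ker.subtype
  have hgM : g ∉ M := by
    rintro ⟨x, hx, rfl⟩
    exact hqg hx
  have : M.FiniteIndex := ⟨by
    rw [Subgroup.index_map_subtype]
    exact mul_ne_zero Subgroup.FiniteIndex.index_ne_zero Subgroup.FiniteIndex.index_ne_zero⟩
  obtain ⟨k, hk⟩ := isPGroup_iff_exists_pow_pow_eq_one.mp hH
  obtain ⟨l, hl⟩ := isPGroup_iff_exists_pow_pow_eq_one.mp hQ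
  have hpowM (x : G) : x ^ p ^ (k + l) ∈ M := by
    have hx : x ^ p ^ k ∈ f.ker := by rw [MonoidHom.mem_ker, map_pow, hk]
    refine ⟨⟨x ^ p ^ k, hx⟩ ^ p ^ l, ?_, ?_⟩
    · exact (map_pow q _ _).trans (hl _)
    · rw [map_pow, Subgroup.subtype_apply, ← pow_mul, ← pow_add]
  have hquot : IsPGroup p (G ⧸ M.normalCore) := by
    refine isPGroup_iff_pow_pow_eq_one.mpr fun y => ⟨k + l, ?_⟩
    obtain ⟨x, rfl⟩ := QuotientGroup.mk_surjective y
    rw [← QuotientGroup.mk_pow, QuotientGroup.eq_one_iff]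
    intro c
    rw [← conj_pow]
    exact hpowM _
  exact SurvivesInFiniteP.of_map_ne_one hquot (QuotientGroup.mk' M.normalCore) fun h =>
    hgM (M.normalCore_le ((QuotientGroup.eq_one_iff g).mp h))

theorem semidirectProduct {N C : Type*} [Group N] [Group C] [Finite C] (hN : ResiduallyFiniteP p N)
    (hC : IsPGroup p C) (φ : C →* MulAut N) :
    ResiduallyFiniteP p (N ⋊[φ] C) := by
  refine of_ker hC SemidirectProduct.rightHom ?_
  rw [← SemidirectProduct.range_inl_eq_ker_rightHom]
  exact hN.of_injective
    (f := (MonoidHom.ofInjective (SemidirectProduct.inl_injective (φ := φ))).symm.toMonoidHom)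
    (MulEquiv.injective _)

end ResiduallyFiniteP

/-- The homomorphism `e ↦ 1 + e • N` attached to an element `N` of square zero. -/
def oneAddZSMulHom {R : Type*} [Ring R] (N : R) (hN : N * N = 0) : Multiplicative ℤ →* R where
  toFun e := 1 + e.toAdd • N
  map_one' := by simp
  map_mul' e f := by
    simp only [toAdd_mul, add_smul, mul_add, add_mul, one_mul, mul_one, smul_mul_smul_comm, hN,
      smul_zero, add_zero, add_assoc]

section ColoredShift

variable {L : ℕ} {R ι : Type*} [CommRing R]

theorem partialProd_hessenberg_apply_zero {M : Fin L → Matrix (Fin (L + 1)) (Fin (L + 1)) R}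
    (hM : ∀ (k : Fin L) (i j : Fin (L + 1)), (i : ℕ) + 1 < j → M k i j = 0) (j : Fin (L + 1)) :
    (∀ l, j < l → Fin.partialProd M j 0 l = 0) ∧
      Fin.partialProd M j 0 j = Fin.partialProd (fun k => M k k.castSucc k.succ) j := by
  induction j using Fin.induction with
  | zero => simp +contextual [Fin.partialProd_zero, ne_comm, Fin.pos_iff_ne_zero]
  | succ j ih =>
    obtain ⟨hzero, hdiag⟩ := ih
    simp only [Fin.partialProd_succ, Matrix.mul_apply]
    refine ⟨fun l hl => Finset.sum_eq_zero fun i _ => ?_, ?_⟩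
    · rcases lt_or_ge j.castSucc i with hi | hi
      · rw [hzero i hi, zero_mul]
      · rw [hM j i l (by simp only [Fin.lt_def, Fin.le_def, Fin.val_succ,
          Fin.val_castSucc] at hl hi; omega), mul_zero]
    · rw [Finset.sum_eq_single j.castSucc _ (by simp), hdiag]
      intro i _ hi
      rcases hi.lt_or_gt with hi | hi
      · rw [hM j i j.succ (by simpa [Fin.lt_def] using hi), mul_zero]
      · rw [hzero i hi, zero_mul]

open scoped Classical in
variable (R) in
/-- The part of the superdiagonal shift matrix that consists of the steps `k → k + 1` of colour
`x`, where the step `k → k + 1` has colour `c k`. -/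
noncomputable def coloredShift (c : Fin L → ι) (x : ι) : Matrix (Fin (L + 1)) (Fin (L + 1)) R :=
  Matrix.of fun i j => if ∃ k : Fin L, i = k.castSucc ∧ j = k.succ ∧ c k = x then 1 else 0

theorem coloredShift_castSucc_succ (c : Fin L → ι) (k : Fin L) :
    coloredShift R c (c k) k.castSucc k.succ = 1 :=
  if_pos ⟨k, rfl, rfl, rfl⟩

theorem coloredShift_apply_eq_zero {c : Fin L → ι} {x : ι} {i j : Fin (L + 1)}
    (hij : (j : ℕ) ≠ i + 1) : coloredShift R c x i j = 0 :=
  if_neg (by rintro ⟨k, rfl, rfl, -⟩; exact hij (by simp))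

theorem coloredShift_mul_self {c : Fin L → ι} (hc : ∀ k k', k.succ = k'.castSucc → c k ≠ c k')
    (x : ι) : coloredShift R c x * coloredShift R c x = 0 := by
  ext i l
  rw [Matrix.mul_apply]
  refine Finset.sum_eq_zero fun j _ => ?_
  simp only [coloredShift, Matrix.of_apply, mul_ite, mul_one, mul_zero]
  split_ifs with h₁ h₂ <;> try rfl
  obtain ⟨k', hjk', -, hk'⟩ := h₁
  obtain ⟨k, -, hjk, hk⟩ := h₂
  exact (hc k k' (hjk.symm.trans hjk') (hk.trans hk'.symm)).elim

theorem one_add_zsmul_coloredShift_mem_upperUnipotent (c : Fin L → ι) (x : ι) (e : ℤ) :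
    1 + e • coloredShift R c x ∈ upperUnipotent (Fin (L + 1)) R := by
  refine ⟨Matrix.blockTriangular_one.add fun i j hij => ?_, fun i => ?_⟩
  · rw [Matrix.smul_apply, coloredShift_apply_eq_zero, smul_zero]
    simp only [id_eq, Fin.lt_def] at hij
    omega
  · rw [Matrix.add_apply, Matrix.smul_apply, coloredShift_apply_eq_zero (by omega), smul_zero,
      Matrix.one_apply_eq, add_zero, sub_self]
    exact .zero

theorem prod_one_add_zsmul_coloredShift_apply (c : Fin L → ι) (e : Fin L → ℤ) :
    (List.ofFn fun k => 1 + e k • coloredShift R c (c k)).prod 0 (Fin.last L) =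
      ∏ k, (e k : R) := by
  have h := (partialProd_hessenberg_apply_zero (M := fun k => 1 + e k • coloredShift R c (c k))
    (fun k i j hij => ?_) (Fin.last L)).2
  · simpa only [Fin.partialProd, Fin.val_last, List.take_of_length_le, List.length_ofFn, le_refl,
      List.prod_ofFn, Matrix.add_apply, Matrix.smul_apply, coloredShift_castSucc_succ,
      Matrix.one_apply_ne Fin.castSucc_lt_succ.ne, zero_add, zsmul_one] using h
  · rw [Matrix.add_apply, Matrix.smul_apply, coloredShift_apply_eq_zero (by omega),
      Matrix.one_apply_ne (by rintro rfl; omega), smul_zero, add_zero]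

end ColoredShift

theorem finiteMultiplicity_intCast_prime {p : ℕ} (hp : p.Prime) {k : ℤ} (hk : k ≠ 0) :
    FiniteMultiplicity (p : ℤ) k :=
  Int.finiteMultiplicity_iff.mpr ⟨by simpa using hp.ne_one, hk⟩

theorem exists_intCast_zmod_prime_pow_ne_zero {p : ℕ} (hp : p.Prime) {k : ℤ} (hk : k ≠ 0) :
    ∃ N, (k : ZMod (p ^ N)) ≠ 0 := by
  obtain ⟨N, hN⟩ := finiteMultiplicity_intCast_prime hp hk
  exact ⟨N + 1, by simpa [ZMod.intCast_zmod_eq_zero_iff_dvd] using hN⟩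

theorem isNilpotent_natCast_zmod_pow (p N : ℕ) : IsNilpotent (p : ZMod (p ^ N)) :=
  ⟨N, by exact_mod_cast ZMod.natCast_self (p ^ N)⟩

section FreeProduct

open Monoid

variable {p : ℕ} {ι : Type*} {G : ι → Type*} [∀ i, Group (G i)]

theorem survivesInFiniteP_prod_syllables (hp : p.Prime) (χ : ∀ i, G i →* Multiplicative ℤ)
    {L : ℕ} [NeZero L] (s : Fin L → Σ i, G i) (hχ : ∀ k, χ (s k).1 (s k).2 ≠ 1)
    (hs : ∀ k k', k.succ = k'.castSucc → (s k).1 ≠ (s k').1) :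
    SurvivesInFiniteP p (List.ofFn fun k => CoprodI.of (s k).2).prod := by
  let c (k : Fin L) : ι := (s k).1
  let e (k : Fin L) : ℤ := (χ _ (s k).2).toAdd
  obtain ⟨N, hN⟩ :=
    exists_intCast_zmod_prime_pow_ne_zero hp (Finset.prod_ne_zero_iff.mpr fun k _ => hχ k :
      ∏ k, e k ≠ 0)
  have : NeZero (p ^ N) := ⟨pow_ne_zero _ hp.ne_zero⟩
  let ρ (i : ι) : G i →* upperUnipotent (Fin (L + 1)) (ZMod (p ^ N)) :=
    ((oneAddZSMulHom (coloredShift _ c i) (coloredShift_mul_self hs i)).comp (χ i)).codRestrict _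
      fun y => one_add_zsmul_coloredShift_mem_upperUnipotent c i _
  have hprod : (CoprodI.lift ρ (List.ofFn fun k => CoprodI.of (s k).2).prod).1 =
      (List.ofFn fun k => 1 + e k • coloredShift _ c (c k)).prod := by
    rw [map_list_prod, Submonoid.coe_list_prod, List.map_ofFn, List.map_ofFn]
    simp only [Function.comp_def, CoprodI.lift_of]
    rfl
  refine SurvivesInFiniteP.of_upperUnipotent hp (isNilpotent_natCast_zmod_pow p N)
    (CoprodI.lift ρ) fun h => hN ?_
  rw [Int.cast_prod, ← prod_one_add_zsmul_coloredShift_apply c e, ← hprod, h]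
  exact Matrix.one_apply_ne Fin.last_pos'.ne

theorem residuallyFiniteP_coprodI (hp : p.Prime) (χ : ∀ i, G i →* Multiplicative ℤ)
    (hχ : ∀ i, Function.Injective (χ i)) : ResiduallyFiniteP p (CoprodI G) := by
  classical
  intro g hg
  obtain ⟨w, rfl⟩ := CoprodI.Word.equiv.symm.surjective g
  have : NeZero w.toList.length := ⟨fun h => hg <| by
    have hw : w = .empty := CoprodI.Word.ext (List.length_eq_zero_iff.mp h)
    rw [hw]
    exact CoprodI.Word.prod_empty⟩
  change SurvivesInFiniteP p (w.toList.map fun s => CoprodI.of s.2).prod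
  rw [← List.ofFn_getElem_eq_map]
  refine survivesInFiniteP_prod_syllables hp χ _ (fun k => ?_) fun k k' hkk' => ?_
  · exact (map_ne_one_iff _ (hχ _)).mpr (w.ne_one _ (List.getElem_mem k.2))
  · obtain ⟨k', hk'⟩ := k'
    obtain rfl : k + 1 = k' := congrArg Fin.val hkk'
    exact List.isChain_iff_getElem.mp w.chain_ne k _

end FreeProduct

theorem residuallyFiniteP_freeGroup {p : ℕ} (hp : p.Prime) (α : Type*) :
    ResiduallyFiniteP p (FreeGroup α) :=
  (residuallyFiniteP_coprodI hp
    (fun _ : α => (FreeGroup.mulEquivIntOfUnique (α := Unit)).toMonoidHom)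
    fun _ => MulEquiv.injective _).of_injective
      (f := freeGroupEquivCoprodI.toMonoidHom) (MulEquiv.injective _)

theorem residuallyFiniteP_multiplicative_int {p : ℕ} (hp : p.Prime) :
    ResiduallyFiniteP p (Multiplicative ℤ) :=
  (residuallyFiniteP_freeGroup hp Unit).of_injective
    (f := (FreeGroup.mulEquivIntOfUnique (α := Unit)).symm.toMonoidHom) (MulEquiv.injective _)

/-! ### Baumslag–Solitar groups as HNN extensions -/

theorem not_commute_conj_of_hnnExtension {G : Type*} [Group G] {A B : Subgroup G} (φ : A ≃* B)
    {g h : G} (hg : g ∉ A) (hh : h ∉ B) :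
    ¬ Commute (HNNExtension.t * HNNExtension.of g * HNNExtension.t⁻¹ : HNNExtension G A B φ)
      (HNNExtension.of h) := by
  intro hcomm
  have hchain (x : G) : List.IsChain (fun a b : ℤˣ × G =>
      a.2 ∈ HNNExtension.toSubgroup A B a.1 → a.1 = b.1) [(1, g), (-1, x)] := by
    simp [hg]
  let w₁ : HNNExtension.NormalWord.ReducedWord G A B := ⟨1, [(1, g), (-1, h)], hchain h⟩
  let w₂ : HNNExtension.NormalWord.ReducedWord G A B := ⟨h, [(1, g), (-1, 1)], hchain 1⟩
  have hprod : w₁.prod φ = w₂.prod φ := by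
    simpa [w₁, w₂, HNNExtension.NormalWord.ReducedWord.prod, mul_assoc] using hcomm.eq
  have hhead := (HNNExtension.ReducedWord.map_fst_eq_and_of_prod_eq φ hprod).2 1 (by simp [w₁])
  exact hh (by simpa [w₁, w₂] using hhead)

/-- The isomorphism between cyclic subgroups generated by elements `x` and `y` of the same order
that takes `x` to `y`. -/
noncomputable def zpowersEquiv {G : Type*} [Group G] {x y : G} (h : orderOf x = orderOf y) :
    Subgroup.zpowers x ≃* Subgroup.zpowers y :=
  mulEquivOfOrderOfEq (g := ⟨x, Subgroup.mem_zpowers x⟩) (g' := ⟨y, Subgroup.mem_zpowers y⟩)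
    (fun ⟨_, k, hk⟩ => ⟨k, Subtype.ext hk⟩) (fun ⟨_, k, hk⟩ => ⟨k, Subtype.ext hk⟩)
    (by rwa [Subgroup.orderOf_mk, Subgroup.orderOf_mk])

theorem zpowersEquiv_self {G : Type*} [Group G] {x y : G} (h : orderOf x = orderOf y) :
    zpowersEquiv h ⟨x, Subgroup.mem_zpowers x⟩ = ⟨y, Subgroup.mem_zpowers y⟩ :=
  mulEquivOfOrderOfEq_apply_gen ..

/-- The Baumslag–Solitar group `⟨t, a | t aⁿ t⁻¹ = aᵐ⟩`, with the generators `a` and `t` indexed by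
`false` and `true`. -/
abbrev BaumslagSolitar (m n : ℤ) : Type :=
  PresentedGroup
    ({FreeGroup.of true * FreeGroup.of false ^ n * (FreeGroup.of true)⁻¹ *
      (FreeGroup.of false ^ m)⁻¹} : Set (FreeGroup Bool))

namespace BaumslagSolitar

/-- The base generator of `BS(m, n)`. -/
def a (m n : ℤ) : BaumslagSolitar m n := PresentedGroup.of false

/-- The stable letter of `BS(m, n)`. -/
def t (m n : ℤ) : BaumslagSolitar m n := PresentedGroup.of true

theorem conj_t_a_zpow (m n : ℤ) : t m n * a m n ^ n * (t m n)⁻¹ = a m n ^ m :=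
  mul_inv_eq_one.mp (PresentedGroup.one_of_mem (Set.mem_singleton _))

theorem closure_a_t (m n : ℤ) : Subgroup.closure {a m n, t m n} = ⊤ := by
  rw [← PresentedGroup.closure_range_of, Bool.range_eq]
  rfl

section Lift

variable {m n : ℤ} {H : Type*} [Group H]

/-- The homomorphism `a ↦ x`, `t ↦ y` given by a solution `(x, y)` of the defining relation. -/
def lift (x y : H) (h : y * x ^ n * y⁻¹ = x ^ m) : BaumslagSolitar m n →* H :=
  PresentedGroup.toGroup (f := fun b => cond b y x) <| by
    rintro _ rfl
    simpa [mul_inv_eq_one] using h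

@[simp]
theorem lift_a (x y : H) (h : y * x ^ n * y⁻¹ = x ^ m) : lift x y h (a m n) = x :=
  PresentedGroup.toGroup.of _

@[simp]
theorem lift_t (x y : H) (h : y * x ^ n * y⁻¹ = x ^ m) : lift x y h (t m n) = y :=
  PresentedGroup.toGroup.of _

theorem hom_ext {f g : BaumslagSolitar m n →* H} (ha : f (a m n) = g (a m n))
    (ht : f (t m n) = g (t m n)) : f = g :=
  PresentedGroup.ext (Bool.rec ha ht)

end Lift

/-- The isomorphism `BS(m, n) → BS(n, m)` that inverts the stable letter, as a homomorphism. -/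
def swapHom (m n : ℤ) : BaumslagSolitar m n →* BaumslagSolitar n m :=
  lift (a n m) (t n m)⁻¹ <| by rw [← conj_t_a_zpow n m]; group

theorem swapHom_injective (m n : ℤ) : Function.Injective (swapHom m n) := by
  have h : (swapHom n m).comp (swapHom m n) = MonoidHom.id _ :=
    hom_ext (by simp [swapHom]) (by simp [swapHom])
  exact Function.LeftInverse.injective (DFunLike.congr_fun h)

section HNN

open Multiplicative (ofAdd)

variable {m n : ℤ}

theorem orderOf_ofAdd_eq_orderOf_ofAdd (hm : m ≠ 0) (hn : n ≠ 0) :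
    orderOf (ofAdd n) = orderOf (ofAdd m) := by
  rw [orderOf_eq_zero (not_isOfFinOrder_of_isMulTorsionFree (ofAdd_eq_one.not.mpr hn)),
    orderOf_eq_zero (not_isOfFinOrder_of_isMulTorsionFree (ofAdd_eq_one.not.mpr hm))]

/-- The comparison homomorphism from `BS(m, n)` to the HNN extension of the infinite cyclic group
that identifies the subgroups `nℤ` and `mℤ`. -/
noncomputable def toHNNExtension (hm : m ≠ 0) (hn : n ≠ 0) :
    BaumslagSolitar m n →* HNNExtension (Multiplicative ℤ) (Subgroup.zpowers (ofAdd n))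
      (Subgroup.zpowers (ofAdd m)) (zpowersEquiv (orderOf_ofAdd_eq_orderOf_ofAdd hm hn)) :=
  lift (HNNExtension.of (ofAdd 1)) HNNExtension.t <| by
    have hconj := HNNExtension.equiv_eq_conj
      (φ := zpowersEquiv (orderOf_ofAdd_eq_orderOf_ofAdd hm hn))
      ⟨ofAdd n, Subgroup.mem_zpowers _⟩
    rw [zpowersEquiv_self] at hconj
    simpa only [← map_zpow, ← ofAdd_zsmul, smul_eq_mul, mul_one] using hconj.symm

theorem toHNNExtension_a_zpow (hm : m ≠ 0) (hn : n ≠ 0) (k : ℤ) :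
    toHNNExtension hm hn (a m n ^ k) = HNNExtension.of (ofAdd k) := by
  rw [map_zpow, toHNNExtension, lift_a, ← map_zpow, ← ofAdd_zsmul, smul_eq_mul, mul_one]

theorem a_zpow_ne_one (hm : m ≠ 0) (hn : n ≠ 0) {k : ℤ} (hk : k ≠ 0) : a m n ^ k ≠ 1 := by
  intro h
  have himage := toHNNExtension_a_zpow hm hn k
  rw [h, map_one, eq_comm, map_eq_one_iff _ (HNNExtension.of_injective _)] at himage
  exact hk (ofAdd_eq_one.mp himage)

theorem not_commute_conj_t_a_zpow (hm : m ≠ 0) (hn : n ≠ 0) {e f : ℤ} (he : ¬ n ∣ e)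
    (hf : ¬ m ∣ f) : ¬ Commute (t m n * a m n ^ e * (t m n)⁻¹) (a m n ^ f) := by
  intro h
  have himage := h.map (toHNNExtension hm hn)
  simp only [map_mul, map_inv, toHNNExtension_a_zpow] at himage
  rw [show toHNNExtension hm hn (t m n) = HNNExtension.t from lift_t ..] at himage
  have hdvd {k l : ℤ} (h : ofAdd l ∈ Subgroup.zpowers (ofAdd k)) : k ∣ l := by
    obtain ⟨c, hc⟩ := h
    exact ⟨c, by simpa [mul_comm] using congrArg Multiplicative.toAdd hc.symm⟩
  exact not_commute_conj_of_hnnExtension _ (mt hdvd he) (mt hdvd hf) himage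

end HNN

end BaumslagSolitar

/-! ### Necessity -/

theorem conj_pow_eq_zpow_pow {G : Type*} [Group G] {x y : G} {m : ℤ} (h : y * x * y⁻¹ = x ^ m)
    (k : ℕ) : y ^ k * x * (y ^ k)⁻¹ = x ^ m ^ k := by
  induction k with
  | zero => simp
  | succ k ih =>
    calc y ^ (k + 1) * x * (y ^ (k + 1))⁻¹ = y ^ k * (y * x * y⁻¹) * (y ^ k)⁻¹ := by group
      _ = (y ^ k * x * (y ^ k)⁻¹) ^ m := by rw [h, conj_zpow]
      _ = x ^ m ^ (k + 1) := by rw [ih, ← zpow_mul, pow_succ]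

section PGroup

variable {p : ℕ} {Q : Type*} [Group Q] {x y z : Q} {b c m : ℤ}

theorem eq_one_of_isPGroup_of_conj_eq_zpow (hp : p.Prime) (hQ : IsPGroup p Q)
    (h : y * x * y⁻¹ = x ^ m) (hm : ¬ (p : ℤ) ∣ m - 1) : x = 1 := by
  have := Fact.mk hp
  obtain ⟨k, hk⟩ := isPGroup_iff_pow_pow_eq_one.mp hQ y
  obtain ⟨i, hi⟩ := IsPGroup.iff_orderOf.mp hQ x
  have hfix : x ^ (m ^ p ^ k - 1) = 1 := by
    have := conj_pow_eq_zpow_pow h (p ^ k)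
    rw [hk, one_mul, inv_one, mul_one] at this
    rw [zpow_sub_one, ← this, mul_inv_cancel]
  have hdvd : ((p ^ i : ℕ) : ℤ) ∣ m ^ p ^ k - 1 := hi ▸ orderOf_dvd_iff_zpow_eq_one.mpr hfix
  have hi0 : i = 0 := by
    by_contra hi0
    have hp_dvd : (p : ℤ) ∣ m ^ p ^ k - 1 :=
      (Int.natCast_dvd_natCast.mpr (dvd_pow_self p hi0)).trans hdvd
    rw [← ZMod.intCast_zmod_eq_zero_iff_dvd] at hp_dvd hm
    simp only [Int.cast_sub, Int.cast_pow, ZMod.pow_card_pow, Int.cast_one] at hp_dvd hm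
    exact hm hp_dvd
  rw [← orderOf_eq_one_iff, hi, hi0, pow_zero]

theorem eq_one_of_isPGroup_of_conj_zpow_eq_zpow (hp : p.Prime) (hQ : IsPGroup p Q)
    (h : y * x ^ b * y⁻¹ = x ^ c) (hb : ¬ (p : ℤ) ∣ b) (hc : (p : ℤ) ∣ c) : x = 1 := by
  have := Fact.mk hp
  obtain ⟨i, hi⟩ := IsPGroup.iff_orderOf.mp hQ x
  rcases i with _ | i
  · rw [← orderOf_eq_one_iff, hi, pow_zero]
  have hp0 : ((p : ℤ) ^ i) ≠ 0 := pow_ne_zero _ (by exact_mod_cast hp.ne_zero)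
  have hcpow : x ^ (c * p ^ i) = 1 := by
    rw [← orderOf_dvd_iff_zpow_eq_one, hi, pow_succ']
    push_cast
    exact mul_dvd_mul_right hc _
  have hbpow : x ^ (b * p ^ i) = 1 := by
    rw [← conj_eq_one_iff (a := y), zpow_mul, ← conj_zpow, h, ← zpow_mul, hcpow]
  rw [← orderOf_dvd_iff_zpow_eq_one, hi, pow_succ'] at hbpow
  push_cast at hbpow
  exact (hb (Int.dvd_of_mul_dvd_mul_right hp0 hbpow)).elim

theorem commute_conj_of_isPGroup (hp : p.Prime) (hQ : IsPGroup p Q)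
    (h : y * x ^ b * y⁻¹ = x ^ c) (hb : ¬ (p : ℤ) ∣ b) (hxz : Commute x z) :
    Commute (y * x * y⁻¹) z := by
  have := Fact.mk hp
  obtain ⟨i, hi⟩ := IsPGroup.iff_orderOf.mp hQ x
  have hcop : IsCoprime b (orderOf x : ℤ) := by
    rw [hi, Nat.cast_pow]
    exact (((Nat.prime_iff_prime_int.mp hp).coprime_iff_not_dvd.mpr hb).symm).pow_right
  obtain ⟨u, v, huv⟩ := hcop
  have hx : x = (x ^ b) ^ u := by
    rw [← zpow_mul, mul_comm, eq_sub_of_add_eq huv, zpow_sub, zpow_one, mul_comm, zpow_mul,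
      zpow_natCast, pow_orderOf_eq_one, one_zpow, inv_one, mul_one]
  rw [hx, ← conj_zpow, h]
  exact (hxz.zpow_left c).zpow_left u

end PGroup

namespace ResiduallyFiniteP

variable {p : ℕ} {G : Type*} [Group G] {x y z : G} {b c m : ℤ}

theorem eq_of_forall_map_eq (hG : ResiduallyFiniteP p G)
    (h : ∀ (Q : Type) [Group Q], IsPGroup p Q → ∀ f : G →* Q, f x = f y) : x = y := by
  by_contra hxy
  obtain ⟨Q, _, f, -, hQ, hf⟩ := hG (x * y⁻¹) (mul_inv_eq_one.not.mpr hxy)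
  exact hf (by rw [map_mul, map_inv, h Q hQ f, mul_inv_cancel])

theorem eq_one_of_conj_eq_zpow (hp : p.Prime) (hG : ResiduallyFiniteP p G)
    (h : y * x * y⁻¹ = x ^ m) (hm : ¬ (p : ℤ) ∣ m - 1) : x = 1 :=
  hG.eq_of_forall_map_eq fun Q _ hQ f => by
    rw [map_one]
    exact eq_one_of_isPGroup_of_conj_eq_zpow hp hQ (by simpa using congrArg f h) hm

theorem eq_one_of_conj_zpow_eq_zpow (hp : p.Prime) (hG : ResiduallyFiniteP p G)
    (h : y * x ^ b * y⁻¹ = x ^ c) (hb : ¬ (p : ℤ) ∣ b) (hc : (p : ℤ) ∣ c) : x = 1 :=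
  hG.eq_of_forall_map_eq fun Q _ hQ f => by
    rw [map_one]
    exact eq_one_of_isPGroup_of_conj_zpow_eq_zpow hp hQ (by simpa using congrArg f h) hb hc

theorem commute_conj (hp : p.Prime) (hG : ResiduallyFiniteP p G)
    (h : y * x ^ b * y⁻¹ = x ^ c) (hb : ¬ (p : ℤ) ∣ b) (hxz : Commute x z) :
    Commute (y * x * y⁻¹) z :=
  hG.eq_of_forall_map_eq fun Q _ hQ f => by
    simpa using (commute_conj_of_isPGroup hp hQ (by simpa using congrArg f h) hb (hxz.map f)).eq

end ResiduallyFiniteP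

namespace BaumslagSolitar

variable {p : ℕ} {m n : ℤ}

theorem conj_t_a_zpow_zpow (q m' n' : ℤ) :
    t (q * m') (q * n') * (a (q * m') (q * n') ^ q) ^ n' * (t (q * m') (q * n'))⁻¹ =
      (a (q * m') (q * n') ^ q) ^ m' := by
  rw [← zpow_mul, ← zpow_mul, conj_t_a_zpow]

theorem multiplicity_le_of_residuallyFiniteP (hp : p.Prime) (hm : m ≠ 0) (hn : n ≠ 0)
    (h : ResiduallyFiniteP p (BaumslagSolitar m n)) :
    multiplicity (p : ℤ) m ≤ multiplicity (p : ℤ) n := by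
  by_contra! hlt
  obtain ⟨n', hn', hpn'⟩ := (finiteMultiplicity_intCast_prime hp hn).exists_eq_pow_mul_and_not_dvd
  generalize multiplicity (p : ℤ) n = s at hlt hn'
  obtain ⟨m', hm'⟩ := pow_dvd_of_le_multiplicity hlt
  rw [pow_succ, mul_assoc] at hm'
  subst hm' hn'
  refine a_zpow_ne_one hm hn (left_ne_zero_of_mul hm) ?_
  exact h.eq_one_of_conj_zpow_eq_zpow hp (conj_t_a_zpow_zpow ..) hpn' (dvd_mul_right ..)

theorem multiplicity_eq_of_residuallyFiniteP (hp : p.Prime) (hm : m ≠ 0) (hn : n ≠ 0)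
    (h : ResiduallyFiniteP p (BaumslagSolitar m n)) :
    multiplicity (p : ℤ) m = multiplicity (p : ℤ) n :=
  (multiplicity_le_of_residuallyFiniteP hp hm hn h).antisymm
    (multiplicity_le_of_residuallyFiniteP hp hn hm (h.of_injective (swapHom_injective n m)))

theorem dvd_prime_pow_of_residuallyFiniteP (hp : p.Prime) (hm : m ≠ 0) (hn : n ≠ 0)
    (hm1 : ¬ m ∣ 1) (h : ResiduallyFiniteP p (BaumslagSolitar m n)) :
    n ∣ (p : ℤ) ^ multiplicity (p : ℤ) n := by
  have hmul := multiplicity_eq_of_residuallyFiniteP hp hm hn h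
  obtain ⟨n', hn', hpn'⟩ := (finiteMultiplicity_intCast_prime hp hn).exists_eq_pow_mul_and_not_dvd
  obtain ⟨m', hm'⟩ := pow_multiplicity_dvd (p : ℤ) m
  rw [hmul] at hm'
  generalize multiplicity (p : ℤ) n = s at hm' hn' ⊢
  by_contra hns
  refine not_commute_conj_t_a_zpow hm hn hns hm1 ?_
  subst hm' hn'
  exact h.commute_conj hp (conj_t_a_zpow_zpow ..) hpn' ((Commute.refl _).zpow_zpow _ _)

theorem eq_prime_pow_of_residuallyFiniteP (hp : p.Prime) (hm : m ≠ 0) (hn : 0 < n)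
    (hm1 : ¬ m ∣ 1) (hn1 : ¬ n ∣ 1) (h : ResiduallyFiniteP p (BaumslagSolitar m n)) :
    ∃ r : ℕ, n = (p : ℤ) ^ r ∧ (m = n ∨ m = -n) := by
  set s := multiplicity (p : ℤ) n
  have hmul : multiplicity (p : ℤ) m = s := multiplicity_eq_of_residuallyFiniteP hp hm hn.ne' h
  have hn_dvd : n ∣ (p : ℤ) ^ s := dvd_prime_pow_of_residuallyFiniteP hp hm hn.ne' hm1 h
  have hm_dvd : m ∣ (p : ℤ) ^ s := hmul ▸
    dvd_prime_pow_of_residuallyFiniteP hp hn.ne' hm hn1 (h.of_injective (swapHom_injective n m))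
  have hns : n = (p : ℤ) ^ s :=
    Int.dvd_antisymm hn.le (by positivity) hn_dvd (pow_multiplicity_dvd _ _)
  refine ⟨s, hns, Int.natAbs_eq_natAbs_iff.mp (Int.natAbs_eq_of_dvd_dvd ?_ ?_)⟩
  · exact hns ▸ hm_dvd
  · rw [hns, ← hmul]
    exact pow_multiplicity_dvd _ _

theorem eq_two_of_residuallyFiniteP_neg (hp : p.Prime) (hn : n ≠ 0)
    (h : ResiduallyFiniteP p (BaumslagSolitar (-n) n)) : p = 2 := by
  by_contra hp2
  have hconj : t (-n) n * a (-n) n ^ n * (t (-n) n)⁻¹ = (a (-n) n ^ n) ^ (-1 : ℤ) := by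
    rw [conj_t_a_zpow, zpow_neg, zpow_neg_one]
  refine a_zpow_ne_one (neg_ne_zero.mpr hn) hn hn (h.eq_one_of_conj_eq_zpow hp hconj ?_)
  rw [show (-1 - 1 : ℤ) = -(2 : ℕ) by norm_num, dvd_neg, Int.natCast_dvd_natCast]
  exact mt (Nat.prime_dvd_prime_iff_eq hp Nat.prime_two).mp hp2

theorem dvd_sub_one_of_residuallyFiniteP_one (hp : p.Prime) (hm : m ≠ 0)
    (h : ResiduallyFiniteP p (BaumslagSolitar m 1)) : (p : ℤ) ∣ m - 1 := by
  by_contra hpm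
  refine a_zpow_ne_one hm one_ne_zero one_ne_zero ?_
  rw [zpow_one]
  exact h.eq_one_of_conj_eq_zpow hp (by simpa using conj_t_a_zpow m 1) hpm

theorem classification_of_residuallyFiniteP (hp : p.Prime) (hn : 0 < n) (hnm : n ≤ |m|)
    (h : ResiduallyFiniteP p (BaumslagSolitar m n)) :
    (n = 1 ∧ (p : ℤ) ∣ m - 1) ∨ (∃ r : ℕ, m = n ∧ m = (p : ℤ) ^ r) ∨
      (p = 2 ∧ ∃ r : ℕ, 1 ≤ r ∧ m = -n ∧ n = 2 ^ r) := by
  have hm : m ≠ 0 := abs_pos.mp (hn.trans_le hnm)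
  rcases (Int.add_one_le_iff.mpr hn).eq_or_lt' with rfl | hn_gt
  · exact .inl ⟨rfl, dvd_sub_one_of_residuallyFiniteP_one hp hm h⟩
  have hn1 : ¬ n ∣ 1 := fun hdvd => absurd (Int.le_of_dvd one_pos hdvd) (by omega)
  have hm1 : ¬ m ∣ 1 := fun hdvd =>
    absurd (Int.le_of_dvd one_pos ((abs_dvd m 1).mpr hdvd)) (by omega)
  obtain ⟨r, hr, rfl | rfl⟩ := eq_prime_pow_of_residuallyFiniteP hp hm hn hm1 hn1 h
  · exact .inr (.inl ⟨r, rfl, hr⟩)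
  · obtain rfl := eq_two_of_residuallyFiniteP_neg hp hn.ne' h
    refine .inr (.inr ⟨rfl, r, Nat.one_le_iff_ne_zero.mpr ?_, rfl, hr⟩)
    rintro rfl
    exact hn1 (by simp [hr])

end BaumslagSolitar

/-! ### Sufficiency -/

section FinTwo

variable {R : Type*} [CommRing R]

theorem fin_two_mem_upperUnipotent {x y z : R} (hx : IsNilpotent (x - 1))
    (hz : IsNilpotent (z - 1)) :
    !![x, y; 0, z] ∈ upperUnipotent (Fin 2) R :=
  ⟨fun i j hij => by fin_cases i <;> fin_cases j <;> simp_all,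
    fun i => by fin_cases i <;> simpa⟩

variable (R) in
/-- The homomorphism from the integers onto the integral shears of the plane, whose matrices are
`!![1, e; 0, 1]`. -/
def shearHom : Multiplicative ℤ →* upperUnipotent (Fin 2) R where
  toFun e := ⟨!![1, (e.toAdd : R); 0, 1], fin_two_mem_upperUnipotent (by simp) (by simp)⟩
  map_one' := Subtype.ext (by simp [Matrix.one_fin_two])
  map_mul' e f := Subtype.ext (by simp [add_comm])

end FinTwo

namespace BaumslagSolitar

variable {p : ℕ} {m n ε : ℤ}

theorem survivesInFiniteP_a_zpow (hp : p.Prime) (hm : m = n * ε) (hε : (p : ℤ) ∣ ε - 1) {k : ℤ}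
    (hk : k ≠ 0) : SurvivesInFiniteP p (a m n ^ k) := by
  obtain ⟨N, hN⟩ := exists_intCast_zmod_prime_pow_ne_zero hp hk
  have : NeZero (p ^ N) := ⟨pow_ne_zero _ hp.ne_zero⟩
  have hpN := isNilpotent_natCast_zmod_pow p N
  let α : (upperUnipotent (Fin 2) (ZMod (p ^ N)))ˣ := (shearHom _).toHomUnits (.ofAdd 1)
  have hα (e : ℤ) : (α ^ e).1.1 = !![1, (e : ZMod (p ^ N)); 0, 1] := by
    rw [← map_zpow, ← ofAdd_zsmul, smul_eq_mul, mul_one]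
    rfl
  have hε_nil : IsNilpotent ((ε : ZMod (p ^ N)) - 1) := by
    obtain ⟨c, hc⟩ := hε
    rw [← Int.cast_one, ← Int.cast_sub, hc, Int.cast_mul, Int.cast_natCast]
    exact (Commute.all _ _).isNilpotent_mul_right hpN
  obtain ⟨τ, hτ⟩ := isUnit_of_upperUnipotent hp hpN
    ⟨!![(ε : ZMod (p ^ N)), 0; 0, 1], fin_two_mem_upperUnipotent hε_nil (by simp)⟩
  have hrel : τ * α ^ n * τ⁻¹ = α ^ m := by
    rw [mul_inv_eq_iff_eq_mul]
    refine Units.ext (Subtype.ext ?_)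
    simp [hα, hτ, hm, mul_comm]
  refine SurvivesInFiniteP.of_map_ne_one (isPGroup_units_upperUnipotent hp hpN)
    (lift α τ hrel) fun h => hN ?_
  rw [map_zpow, lift_a] at h
  simpa [hα] using congrArg (fun u : (upperUnipotent _ _)ˣ => u.1.1 0 1) h

theorem exists_t_pow_mul_eq_a_zpow_mul_t_pow (m : ℤ) (g : BaumslagSolitar m 1) :
    ∃ (i j : ℕ) (k : ℤ), t m 1 ^ i * g = a m 1 ^ k * t m 1 ^ j := by
  have hconj : t m 1 * a m 1 * (t m 1)⁻¹ = a m 1 ^ m := by simpa using conj_t_a_zpow m 1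
  have hslide (j : ℕ) (e : ℤ) : t m 1 ^ j * a m 1 ^ e = a m 1 ^ (m ^ j * e) * t m 1 ^ j := by
    rw [← mul_inv_eq_iff_eq_mul, ← conj_zpow, conj_pow_eq_zpow_pow hconj, zpow_mul]
  have mul_a_zpow {x : BaumslagSolitar m 1}
      (hx : ∃ (i j : ℕ) (k : ℤ), t m 1 ^ i * x = a m 1 ^ k * t m 1 ^ j) (e : ℤ) :
      ∃ (i j : ℕ) (k : ℤ), t m 1 ^ i * (x * a m 1 ^ e) = a m 1 ^ k * t m 1 ^ j := by
    obtain ⟨i, j, k, hx⟩ := hx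
    exact ⟨i, j, k + m ^ j * e, by rw [← mul_assoc, hx, mul_assoc, hslide, ← mul_assoc, zpow_add]⟩
  have hg : g ∈ Subgroup.closure {a m 1, t m 1} := closure_a_t m 1 ▸ Subgroup.mem_top g
  induction hg using Subgroup.closure_induction_right with
  | one => exact ⟨0, 0, 0, by simp⟩
  | mul_right x _ y hy ih =>
    rcases hy with rfl | rfl
    · simpa using mul_a_zpow ih 1
    · obtain ⟨i, j, k, hx⟩ := ih
      exact ⟨i, j + 1, k, by rw [← mul_assoc, hx, mul_assoc, pow_succ]⟩
  | mul_inv_cancel x _ y hy ih =>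
    rcases hy with rfl | rfl
    · simpa using mul_a_zpow ih (-1)
    · obtain ⟨i, j, k, hx⟩ := ih
      refine ⟨i + 1, j, m * k, ?_⟩
      calc t m 1 ^ (i + 1) * (x * (t m 1)⁻¹) = t m 1 * (t m 1 ^ i * x) * (t m 1)⁻¹ := by group
        _ = t m 1 ^ 1 * a m 1 ^ k * t m 1 ^ j * (t m 1)⁻¹ := by rw [hx]; group
        _ = a m 1 ^ (m * k) * t m 1 ^ j := by rw [hslide]; group

theorem residuallyFiniteP_one (hp : p.Prime) (hm : (p : ℤ) ∣ m - 1) :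
    ResiduallyFiniteP p (BaumslagSolitar m 1) := by
  intro g hg
  let π : BaumslagSolitar m 1 →* Multiplicative ℤ := lift 1 (.ofAdd 1) (by simp)
  by_cases hπ : π g = 1
  swap
  · exact SurvivesInFiniteP.of_map π (residuallyFiniteP_multiplicative_int hp _ hπ)
  obtain ⟨i, j, k, hijk⟩ := exists_t_pow_mul_eq_a_zpow_mul_t_pow m g
  obtain rfl : i = j := by
    simpa [π, hπ, ← ofAdd_nsmul] using congrArg π hijk
  rw [← mul_inv_eq_iff_eq_mul] at hijk
  have hk : k ≠ 0 := by
    rintro rfl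
    exact hg (by simpa using hijk)
  refine SurvivesInFiniteP.of_map (MulAut.conj (t m 1 ^ i)).toMonoidHom ?_
  change SurvivesInFiniteP p (t m 1 ^ i * g * (t m 1 ^ i)⁻¹)
  rw [hijk]
  exact survivesInFiniteP_a_zpow hp (one_mul m).symm hm hk

end BaumslagSolitar

/-- The action of a group on the free group over its underlying set that permutes the free
generators by left translation. -/
def freeGroupTranslation (C : Type*) [Group C] : C →* MulAut (FreeGroup C) where
  toFun c := FreeGroup.freeGroupCongr (Equiv.mulLeft c)
  map_one' := by ext1; simp
  map_mul' c d := MulEquiv.toMonoidHom_injective <|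
    FreeGroup.ext_hom _ _ fun x => by simp [mul_assoc]

@[simp]
theorem freeGroupTranslation_of {C : Type*} [Group C] (c d : C) :
    freeGroupTranslation C c (FreeGroup.of d) = FreeGroup.of (c * d) := by
  simp [freeGroupTranslation]

/-- The universal property of the free product of `C` and an infinite cyclic group, realised as the
semidirect product of `C` with the free group on the conjugates by `C` of a generator of the second
factor: the homomorphism extends `f` and takes this generator to `y`. -/
def freeGroupTranslationLift {C Q : Type*} [Group C] [Group Q] (f : C →* Q) (y : Q) :
    FreeGroup C ⋊[freeGroupTranslation C] C →* Q :=
  SemidirectProduct.lift (FreeGroup.lift fun c => f c * y * (f c)⁻¹) f fun c =>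
    FreeGroup.ext_hom _ _ fun d => by simp [mul_assoc]

theorem isPGroup_zpowers {p r : ℕ} {G : Type*} [Group G] {x : G} (hx : x ^ p ^ r = 1) :
    IsPGroup p (Subgroup.zpowers x) := by
  refine isPGroup_iff_pow_pow_eq_one.mpr ?_
  rintro ⟨_, k, rfl⟩
  refine ⟨r, Subtype.ext ?_⟩
  change (x ^ k) ^ p ^ r = 1
  rw [← zpow_natCast, zpow_comm, zpow_natCast, hx, one_zpow]

namespace BaumslagSolitar

variable {p : ℕ} {m n ε : ℤ}

theorem normal_zpowers_a_zpow (hm : m = n * ε) (hε : IsUnit ε) :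
    (Subgroup.zpowers (a m n ^ n)).Normal := by
  rw [← Subgroup.normalizer_eq_top_iff, eq_top_iff, ← closure_a_t, Subgroup.closure_le]
  rintro x (rfl | rfl) <;>
    rw [SetLike.mem_coe, Subgroup.mem_normalizer_iff_map_conj_eq, MonoidHom.map_zpowers]
  · rw [MonoidHom.coe_coe, MulAut.conj_apply, mul_self_zpow, zpow_add_one, mul_inv_cancel_right]
  · have hconj : MulAut.conj (t m n) (a m n ^ n) = (a m n ^ n) ^ ε := by
      rw [MulAut.conj_apply, conj_t_a_zpow, ← zpow_mul, hm]
    rcases Int.isUnit_iff.mp hε with rfl | rfl <;> simpa using congrArg Subgroup.zpowers hconj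

/- The image of `π` is a quotient of the free product of the finite cyclic `p`-group `C` generated
by `π a` and an infinite cyclic group generated by `t`, and this free product is residually
finite-`p`. -/
theorem survivesInFiniteP_of_map_a_pow_eq_one (hp : p.Prime) {Q : Type*} [Group Q]
    (π : BaumslagSolitar m n →* Q) {r : ℕ} (ha : π (a m n) ^ p ^ r = 1) (hn : (p : ℤ) ^ r ∣ n)
    (hm : (p : ℤ) ^ r ∣ m) {g : BaumslagSolitar m n} (hg : π g ≠ 1) : SurvivesInFiniteP p g := by
  let C := Subgroup.zpowers (π (a m n))
  let c : C := ⟨π (a m n), Subgroup.mem_zpowers _⟩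
  have hc {k : ℤ} (hk : (p : ℤ) ^ r ∣ k) : c ^ k = 1 := by
    obtain ⟨l, rfl⟩ := hk
    rw [zpow_mul, ← Nat.cast_pow, zpow_natCast, show c ^ p ^ r = 1 from Subtype.ext ha, one_zpow]
  have hC_finite : Finite C := finite_zpowers.mpr
    (isOfFinOrder_iff_pow_eq_one.mpr ⟨p ^ r, pow_pos hp.pos r, ha⟩)
  let Ψ : BaumslagSolitar m n →* FreeGroup C ⋊[freeGroupTranslation C] C :=
    lift (SemidirectProduct.inr c) (SemidirectProduct.inl (FreeGroup.of 1)) <| by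
      rw [← map_zpow, ← map_zpow, hc hn, hc hm]
      simp
  let γ := freeGroupTranslationLift C.subtype (π (t m n))
  have hγΨ : γ.comp Ψ = π :=
    hom_ext (by simp [γ, freeGroupTranslationLift, Ψ, c])
      (by simp [γ, freeGroupTranslationLift, Ψ])
  refine SurvivesInFiniteP.of_map Ψ
    ((residuallyFiniteP_freeGroup hp C).semidirectProduct (isPGroup_zpowers ha) _ _ fun hΨg =>
      hg ?_)
  rw [← hγΨ, MonoidHom.comp_apply, hΨg, map_one]

theorem residuallyFiniteP_prime_pow (hp : p.Prime) {r : ℕ} (hn : n = (p : ℤ) ^ r)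
    (hm : m = n * ε) (hε : IsUnit ε) (hpε : (p : ℤ) ∣ ε - 1) :
    ResiduallyFiniteP p (BaumslagSolitar m n) := by
  intro g hg
  by_cases hg_mem : g ∈ Subgroup.zpowers (a m n ^ n)
  · obtain ⟨k, rfl⟩ := hg_mem
    change (a m n ^ n) ^ k ≠ 1 at hg
    change SurvivesInFiniteP p ((a m n ^ n) ^ k)
    rw [← zpow_mul] at hg ⊢
    exact survivesInFiniteP_a_zpow hp hm hpε fun h => hg (by rw [h, zpow_zero])
  · have := normal_zpowers_a_zpow hm hε
    refine survivesInFiniteP_of_map_a_pow_eq_one hp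
      (QuotientGroup.mk' (Subgroup.zpowers (a m n ^ n))) (r := r) ?_ hn.symm.dvd ?_
      (mt (QuotientGroup.eq_one_iff g).mp hg_mem)
    · rw [← map_pow, ← zpow_natCast, Nat.cast_pow, ← hn]
      exact (QuotientGroup.eq_one_iff _).mpr (Subgroup.mem_zpowers _)
    · exact hn ▸ ⟨ε, hm⟩

end BaumslagSolitar

/-- `BS(m,n) = ⟨t, a | t a^n t⁻¹ = a^m⟩`; generator `false` is `a`, generator `true` is `t`. -/
theorem stmt_14 (p : ℕ) (hp : p.Prime) (m n : ℤ) (hm0 : m ≠ 0)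
    (hmn : 0 < n ∧ n ≤ |m|) :
    ResiduallyFiniteP p (PresentedGroup
      ({FreeGroup.of true * FreeGroup.of false ^ n * (FreeGroup.of true)⁻¹ *
          (FreeGroup.of false ^ m)⁻¹} : Set (FreeGroup Bool))) ↔
      (n = 1 ∧ (p : ℤ) ∣ (m - 1)) ∨
      (∃ r : ℕ, m = n ∧ m = (p : ℤ) ^ r) ∨
      (p = 2 ∧ ∃ r : ℕ, 1 ≤ r ∧ m = -n ∧ n = 2 ^ r) := by
  constructor
  · exact BaumslagSolitar.classification_of_residuallyFiniteP hp hmn.1 hmn.2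
  · rintro (⟨rfl, hm⟩ | ⟨r, rfl, hm⟩ | ⟨rfl, r, -, rfl, hn⟩)
    · exact BaumslagSolitar.residuallyFiniteP_one hp hm
    · exact BaumslagSolitar.residuallyFiniteP_prime_pow hp hm (mul_one m).symm isUnit_one (by simp)
    · exact BaumslagSolitar.residuallyFiniteP_prime_pow hp (mod_cast hn) (mul_neg_one n).symm
        isUnit_one.neg (by norm_num)
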